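/- Let n ≥ k ≥ 1, β ≥ 1, and α ∈ (0,1]. Let μ be a function from the k-element subsets of [n]={1,…,n} to the nonnegative reals satisfying β-strong approximate basis exchange. Let P ⊆ [n] and let C be a k-element subset of P with μ(C) > 0 such that μ(C) ≥ α·μ(T) for every k-element subset T of P with |C ∖ T| ≤ 1. Then for every k-element subset W of [n] with (W ∩ P) ∖ C nonempty, there exists a k-element subset W' of [n] such that |W' ∖ C| = |W ∖ C| − 1 and μ(W) ≤ (β/α)·μ(W'). -/

import Mathlib

open Finset

/-!
Let `j ∈ (W ∩ P) \ C`. Strong exchange between `C` and `W` yields `i ∈ C \ W` such that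
`μ C * μ W ≤ β * μ (C - i + j) * μ (W - j + i)`. Since `j ∈ P`, the set `C - i + j` is a neighbour
of `C` inside `P`, so `α * μ (C - i + j) ≤ μ C`, and `μ C` cancels. The set `W - j + i` has lost
`j ∉ C` and gained `i ∈ C`, so it is one element closer to `C`.
-/

section Swap

variable {V : Type*} [DecidableEq V] {i j : V} {S T : Finset V}

theorem card_insert_erase_of_notMem_of_mem (hi : i ∉ S) (hj : j ∈ S) :
    #(insert i (S.erase j)) = #S := by
  rw [card_insert_of_notMem (mt mem_of_mem_erase hi), card_erase_add_one hj]

theorem card_insert_erase_sdiff_add_one (hi : i ∈ T) (hj : j ∈ S \ T) :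
    #(insert i (S.erase j) \ T) + 1 = #(S \ T) := by
  rw [insert_sdiff_of_mem _ hi, erase_sdiff_comm, card_erase_add_one hj]

theorem card_sdiff_insert_erase_le_one : #(S \ insert j (S.erase i)) ≤ 1 := by
  have hsub : S \ insert j (S.erase i) ⊆ {i} := by
    grind
  exact card_le_card hsub

end Swap

section OrderedSemifield

variable {R : Type*} [Semifield R] [LinearOrder R] [IsStrictOrderedRing R]

theorem le_div_mul_of_mul_le_mul_of_mul_le {a b c c' w w' : R} (ha : 0 < a)
    (hb : 0 ≤ b) (hc : 0 < c) (hw' : 0 ≤ w') (hprod : c * w ≤ b * c' * w') (hc' : a * c' ≤ c) :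
    w ≤ b / a * w' := by
  refine le_of_mul_le_mul_left ?_ hc
  calc
    c * w ≤ b * c' * w' := hprod
    _ ≤ b * (c / a) * w' := by gcongr; rwa [le_div_iff₀' ha]
    _ = c * (b / a * w') := by ring

end OrderedSemifield

section CoreSet

variable {V R : Type*} [DecidableEq V]

/-- `β`-strong approximate basis exchange for a weight function on the `k`-element subsets of `V`.
The function is encoded on all finite subsets, but only its values on `k`-element subsets matter. -/
def StrongApproxBasisExchange [Mul R] [LE R] (k : ℕ) (β : R) (μ : Finset V → R) : Prop :=
  ∀ S T : Finset V, #S = k → #T = k → ∀ j ∈ T \ S, ∃ i ∈ S \ T,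
    μ S * μ T ≤ β * μ (insert j (S.erase i)) * μ (insert i (T.erase j))

/-- `C` is an `α`-approximate local maximum of `μ` among the `k`-element subsets of `P`: up to the
factor `α`, its weight is not exceeded by that of any set obtained by exchanging at most one
element of `C` within `P`. -/
structure IsApproxLocalMax [Mul R] [LE R] (k : ℕ) (α : R) (μ : Finset V → R) (P C : Finset V) :
    Prop where
  subset : C ⊆ P
  card_eq : #C = k
  mul_le : ∀ T ⊆ P, #T = k → #(C \ T) ≤ 1 → α * μ T ≤ μ C

theorem IsApproxLocalMax.mul_swap_le [Mul R] [LE R] {k : ℕ} {α : R} {μ : Finset V → R}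
    {P C : Finset V} {i j : V} (hC : IsApproxLocalMax k α μ P C) (hi : i ∈ C) (hj : j ∈ P \ C) :
    α * μ (insert j (C.erase i)) ≤ μ C := by
  obtain ⟨hjP, hjC⟩ := mem_sdiff.mp hj
  refine hC.mul_le _ (insert_subset hjP ((erase_subset i C).trans hC.subset)) ?_
    card_sdiff_insert_erase_le_one
  rw [card_insert_erase_of_notMem_of_mem hjC hi, hC.card_eq]

variable [Semifield R] [LinearOrder R] [IsStrictOrderedRing R] {k : ℕ} {α β : R} {μ : Finset V → R}
  {P C W : Finset V}

theorem StrongApproxBasisExchange.exists_le_div_mul_swap (hexch : StrongApproxBasisExchange k β μ)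
    (hμ : ∀ S, #S = k → 0 ≤ μ S) (hβ : 0 ≤ β) (hα : 0 < α) (hC : IsApproxLocalMax k α μ P C)
    (hCpos : 0 < μ C) (hW : #W = k) {j : V} (hj : j ∈ (W ∩ P) \ C) :
    ∃ i ∈ C \ W, μ W ≤ β / α * μ (insert i (W.erase j)) := by
  obtain ⟨⟨hjW, hjP⟩, hjC⟩ : (j ∈ W ∧ j ∈ P) ∧ j ∉ C := by simpa using hj
  obtain ⟨i, hi, hprod⟩ := hexch C W hC.card_eq hW j (mem_sdiff.mpr ⟨hjW, hjC⟩)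
  obtain ⟨hiC, hiW⟩ := mem_sdiff.mp hi
  have hnonneg : 0 ≤ μ (insert i (W.erase j)) :=
    hμ _ ((card_insert_erase_of_notMem_of_mem hiW hjW).trans hW)
  have hlocal : α * μ (insert j (C.erase i)) ≤ μ C :=
    hC.mul_swap_le hiC (mem_sdiff.mpr ⟨hjP, hjC⟩)
  exact ⟨i, hi, le_div_mul_of_mul_le_mul_of_mul_le hα hβ hCpos hnonneg hprod hlocal⟩

theorem strong_basis_exchange_core_set_step_general (hβ : 0 ≤ β) (hα : 0 < α)
    (hμ : ∀ S, #S = k → 0 ≤ μ S) (hexch : StrongApproxBasisExchange k β μ)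
    (hC : IsApproxLocalMax k α μ P C) (hCpos : 0 < μ C) (hW : #W = k)
    (hne : ((W ∩ P) \ C).Nonempty) :
    ∃ W' : Finset V, #W' = k ∧ #(W' \ C) + 1 = #(W \ C) ∧ μ W ≤ β / α * μ W' := by
  obtain ⟨j, hj⟩ := hne
  obtain ⟨i, hi, hle⟩ := hexch.exists_le_div_mul_swap hμ hβ hα hC hCpos hW hj
  obtain ⟨hiC, hiW⟩ := mem_sdiff.mp hi
  have hjWC : j ∈ W \ C := sdiff_subset_sdiff inter_subset_left Subset.rfl hj
  exact ⟨insert i (W.erase j),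
    (card_insert_erase_of_notMem_of_mem hiW (mem_sdiff.mp hjWC).1).trans hW,
    card_insert_erase_sdiff_add_one hiC hjWC, hle⟩

end CoreSet

/-- Core-set distance-reduction step: if `μ` satisfies `β`-strong approximate basis exchange
and `C ⊆ P` is an `α`-approximate local maximum (in the 1-neighborhood) of `μ` inside `P`,
then any `k`-subset `W` with `(W ∩ P) ∖ C ≠ ∅` can be exchanged towards `C`, losing at most a
`β/α` factor. -/
theorem strong_basis_exchange_core_set_step
    (n k : ℕ) (β α : ℝ)
    (hk : 1 ≤ k) (hkn : k ≤ n)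
    (hβ : 1 ≤ β) (hα : 0 < α) (hα1 : α ≤ 1)
    (μ : Finset (Fin n) → ℝ)
    (hμnonneg : ∀ S : Finset (Fin n), S.card = k → 0 ≤ μ S)
    (hexch : ∀ S T : Finset (Fin n), S.card = k → T.card = k → ∀ j ∈ T \ S,
      ∃ i ∈ S \ T,
        μ S * μ T ≤ β * μ (insert j (S.erase i)) * μ (insert i (T.erase j)))
    (P : Finset (Fin n)) (C : Finset (Fin n))
    (hCsub : C ⊆ P) (hCcard : C.card = k) (hCpos : 0 < μ C)
    (hloc : ∀ T ⊆ P, T.card = k → (C \ T).card ≤ 1 → α * μ T ≤ μ C) :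
    ∀ W : Finset (Fin n), W.card = k → ((W ∩ P) \ C).Nonempty →
      ∃ W' : Finset (Fin n), W'.card = k ∧
        (W' \ C).card + 1 = (W \ C).card ∧
        μ W ≤ (β / α) * μ W' := by
  intro W hW hne
  exact strong_basis_exchange_core_set_step_general (zero_le_one.trans hβ) hα hμnonneg hexch
    ⟨hCsub, hCcard, hloc⟩ hCpos hW hne
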